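/- Let p, q ∈ R be idempotents such that p - q is group invertible. Then p - p*q*p, p - p*q and p - q*p are group invertible, with (p - p*q*p)^# = f*g = (p - q1)^#, (p - p*q)^# = (f*g)^2 * (1-q), and (p - q*p)^# = (1-q) * (f*g)^2. -/

import Mathlib

/-!
Put `d = p - q` and `c = d^#`. Since `d ^ 2 * p = p * (1 - q) * p = p * d ^ 2`, the idempotent
`p` commutes with `d ^ 2`, hence with its group inverse `c ^ 2`, so `p - p * q * p = d ^ 2 * p` has
group inverse `c ^ 2 * p = (p * c) * (c * p)`. Cline's formula `(a * b)^# = a * ((b * a)^#) ^ 2 * b`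
carries this over to `p * (1 - q)` and `(1 - q) * p`: a factor `p` can be split off either of them
so that the reversed product is `p * (1 - q) * p`. The formula applies because `d * c` commutes with
`p` and fixes `d`, hence also `p * (1 - q) = p * d` and `(1 - q) * p = d * p`.
-/

variable {R : Type*} [Ring R]

/-- `c` is a group inverse of `a`. -/
def IsGroupInvOf (a c : R) : Prop := a * c * a = a ∧ c * a * c = c ∧ a * c = c * a

/-- `a` is group invertible. -/
def GroupInvertible (a : R) : Prop := ∃ c, IsGroupInvOf a c

/-- The group inverse `a^#` (junk value `0` if it does not exist). -/
noncomputable def gi (a : R) : R :=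
  haveI := Classical.dec (GroupInvertible a)
  if h : GroupInvertible a then h.choose else 0

/-- The spectral idempotent `a^π = 1 - a * a^#`. -/
noncomputable def sp (a : R) : R := 1 - a * gi a

namespace IsGroupInvOf

variable {a b c d x : R}

theorem commute_self (h : IsGroupInvOf a c) : Commute a c := h.2.2

theorem unique (hb : IsGroupInvOf a b) (hc : IsGroupInvOf a c) : b = c := by
  obtain ⟨aba, bab, ab⟩ := hb
  obtain ⟨aca, cac, ac⟩ := hc
  have products_eq : b * a = a * c := by
    calc b * a = (b * a) * (c * a) := by rw [mul_assoc, ← mul_assoc a, aca]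
      _ = a * b * a * c := by rw [← ab, ← ac, ← mul_assoc]
      _ = a * c := by rw [aba]
  calc b = b * a * b := bab.symm
    _ = c * (a * b) := by rw [products_eq, ac, mul_assoc]
    _ = c := by rw [ab, products_eq, ← mul_assoc, cac]

theorem commute (h : IsGroupInvOf a c) (hx : Commute x a) : Commute x c := by
  obtain ⟨aca, cac, ac⟩ := h
  have left_eq : c * a * x = c * a * x * (a * c) := by
    calc c * a * x = c * x * (a * c * a) := by rw [aca, mul_assoc, ← hx.eq, mul_assoc]
      _ = c * (x * a) * (c * a) := by noncomm_ring
      _ = c * a * x * (a * c) := by rw [hx.eq, ac, ← mul_assoc c]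
  have right_eq : x * (a * c) = c * a * x * (a * c) := by
    calc x * (a * c) = a * c * a * x * c := by rw [aca, ← mul_assoc, hx.eq]
      _ = a * c * (a * x) * c := by noncomm_ring
      _ = c * a * x * (a * c) := by rw [← hx.eq, ← ac]; simp only [mul_assoc]
  have commute_proj : c * a * x = x * (a * c) := left_eq.trans right_eq.symm
  calc x * c = x * (a * c) * c := by rw [ac, mul_assoc, cac]
    _ = c * (a * x) * c := by rw [← commute_proj, mul_assoc c]
    _ = c * (x * (a * c)) := by rw [← hx.eq]; noncomm_ring
    _ = c * (a * c) * x := by rw [← commute_proj, ac, ← mul_assoc c]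
    _ = c * x := by rw [← mul_assoc, cac]

theorem mul (ha : IsGroupInvOf a c) (hb : IsGroupInvOf b d) (hab : Commute a b) :
    IsGroupInvOf (a * b) (c * d) := by
  have had : Commute a d := hb.commute hab
  have hbc : Commute b c := ha.commute hab.symm
  have hcd : Commute c d := hb.commute hbc.symm
  have products : a * b * (c * d) = a * c * (b * d) := hbc.mul_mul_mul_comm a d
  refine ⟨?_, ?_, ?_⟩
  · rw [products, (hab.symm.mul_left had.symm).mul_mul_mul_comm, ha.1, hb.1]
  · rw [had.symm.mul_mul_mul_comm, (hcd.symm.mul_left hbc).mul_mul_mul_comm, ha.2.1, hb.2.1]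
  · rw [products, had.symm.mul_mul_mul_comm, ha.2.2, hb.2.2]

theorem pow (h : IsGroupInvOf a c) (n : ℕ) : IsGroupInvOf (a ^ n) (c ^ n) := by
  have hac := h.commute_self
  refine ⟨?_, ?_, hac.pow_pow n n⟩
  · rw [← hac.mul_pow, ← ((Commute.refl a).mul_left hac.symm).mul_pow, h.1]
  · rw [← hac.symm.mul_pow, ← ((Commute.refl c).mul_left hac).mul_pow, h.2.1]

theorem sq_mul_sq (h : IsGroupInvOf a c) : a ^ 2 * c ^ 2 = a * c := by
  rw [← h.commute_self.mul_pow, sq, ← mul_assoc, h.1]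

/-- `hab` says that `a * b` has index at most one, so that the Drazin inverse given by Cline's
formula is a group inverse. -/
theorem cline_formula {w : R} (h : IsGroupInvOf (b * a) w) (hab : a * (b * a * w) * b = a * b) :
    IsGroupInvOf (a * b) (a * w ^ 2 * b) := by
  obtain ⟨-, inner, comm⟩ := h
  have right_product : a * b * (a * w ^ 2 * b) = a * w * b := by
    calc a * b * (a * w ^ 2 * b) = a * (b * a * w * w) * b := by noncomm_ring
      _ = a * w * b := by rw [comm, inner]
  have left_product : a * w ^ 2 * b * (a * b) = a * w * b := by
    calc a * w ^ 2 * b * (a * b) = a * (w * (w * (b * a))) * b := by noncomm_ring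
      _ = a * w * b := by rw [← comm, ← mul_assoc w, inner]
  refine ⟨?_, ?_, right_product.trans left_product.symm⟩
  · calc a * b * (a * w ^ 2 * b) * (a * b) = a * (w * (b * a)) * b := by
          rw [right_product]; noncomm_ring
      _ = a * b := by rw [← comm, hab]
  · calc a * w ^ 2 * b * (a * b) * (a * w ^ 2 * b) = a * (w * (b * a) * w * w) * b := by
          rw [left_product]; noncomm_ring
      _ = a * w ^ 2 * b := by rw [inner, sq]

theorem gi_eq (h : IsGroupInvOf a c) : gi a = c := by
  have ha : GroupInvertible a := ⟨c, h⟩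
  rw [gi, dif_pos ha]
  exact ha.choose_spec.unique h

end IsGroupInvOf

theorem GroupInvertible.isGroupInvOf_gi {a : R} (h : GroupInvertible a) :
    IsGroupInvOf a (gi a) := by
  obtain ⟨c, hc⟩ := h
  rwa [hc.gi_eq]

theorem isGroupInvOf_self_of_isIdempotentElem {p : R} (hp : IsIdempotentElem p) :
    IsGroupInvOf p p :=
  ⟨by rw [hp.eq, hp.eq], by rw [hp.eq, hp.eq], rfl⟩

section Idempotents

variable {p q c : R}

theorem sub_sq_mul_eq_mul_one_sub_mul (hp : IsIdempotentElem p) (hq : IsIdempotentElem q) :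
    (p - q) ^ 2 * p = p * (1 - q) * p := by
  calc (p - q) ^ 2 * p = (p - q) * ((p - q) * p) := by rw [sq, mul_assoc]
    _ = (p - q) * (1 - q) * p := by rw [sub_mul p q p, hp.eq, mul_assoc, one_sub_mul]
    _ = p * (1 - q) * p := by rw [sub_mul p q, hq.mul_one_sub_self, sub_zero]

theorem mul_sub_sq_eq_mul_one_sub_mul (hp : IsIdempotentElem p) (hq : IsIdempotentElem q) :
    p * (p - q) ^ 2 = p * (1 - q) * p := by
  calc p * (p - q) ^ 2 = p * (p - q) * (p - q) := by rw [sq, mul_assoc]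
    _ = p * ((1 - q) * (p - q)) := by rw [mul_sub p p q, hp.eq, ← mul_one_sub, mul_assoc]
    _ = p * (1 - q) * p := by rw [mul_sub (1 - q), hq.one_sub_mul_self, sub_zero, mul_assoc]

theorem commute_sub_sq (hp : IsIdempotentElem p) (hq : IsIdempotentElem q) :
    Commute p ((p - q) ^ 2) :=
  (mul_sub_sq_eq_mul_one_sub_mul hp hq).trans (sub_sq_mul_eq_mul_one_sub_mul hp hq).symm

theorem commute_groupInv_sq (hp : IsIdempotentElem p) (hq : IsIdempotentElem q)
    (hc : IsGroupInvOf (p - q) c) : Commute p (c ^ 2) :=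
  (hc.pow 2).commute (commute_sub_sq hp hq)

theorem mul_groupInv_sq_mul (hp : IsIdempotentElem p) (hq : IsIdempotentElem q)
    (hc : IsGroupInvOf (p - q) c) : p * (c ^ 2 * p) = c ^ 2 * p := by
  rw [← mul_assoc, (commute_groupInv_sq hp hq hc).eq, mul_assoc, hp.eq]

theorem mul_groupInv_mul_groupInv_mul (hp : IsIdempotentElem p) (hq : IsIdempotentElem q)
    (hc : IsGroupInvOf (p - q) c) : p * c * (c * p) = c ^ 2 * p := by
  rw [← mul_groupInv_sq_mul hp hq hc, sq]
  simp only [mul_assoc]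

theorem isGroupInvOf_mul_one_sub_mul (hp : IsIdempotentElem p) (hq : IsIdempotentElem q)
    (hc : IsGroupInvOf (p - q) c) : IsGroupInvOf (p * (1 - q) * p) (c ^ 2 * p) := by
  rw [← sub_sq_mul_eq_mul_one_sub_mul hp hq]
  exact (hc.pow 2).mul (isGroupInvOf_self_of_isIdempotentElem hp) (commute_sub_sq hp hq).symm

theorem commute_sub_mul_groupInv (hp : IsIdempotentElem p) (hq : IsIdempotentElem q)
    (hc : IsGroupInvOf (p - q) c) : Commute p ((p - q) * c) := by
  rw [← hc.sq_mul_sq]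
  exact (commute_sub_sq hp hq).mul_right (commute_groupInv_sq hp hq hc)

theorem mul_one_sub_mul_mul_groupInv (hp : IsIdempotentElem p) (hq : IsIdempotentElem q)
    (hc : IsGroupInvOf (p - q) c) : p * (1 - q) * p * (c ^ 2 * p) = p * ((p - q) * c) := by
  calc p * (1 - q) * p * (c ^ 2 * p) = (p - q) ^ 2 * c ^ 2 * (p * p) := by
        rw [← sub_sq_mul_eq_mul_one_sub_mul hp hq, (commute_groupInv_sq hp hq hc).mul_mul_mul_comm]
    _ = p * ((p - q) * c) := by rw [hp.eq, hc.sq_mul_sq, (commute_sub_mul_groupInv hp hq hc).eq]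

theorem isGroupInvOf_mul_one_sub (hp : IsIdempotentElem p) (hq : IsIdempotentElem q)
    (hc : IsGroupInvOf (p - q) c) :
    IsGroupInvOf (p * (1 - q)) ((c ^ 2 * p) ^ 2 * (1 - q)) := by
  have split : p * (p * (1 - q)) = p * (1 - q) := by rw [← mul_assoc, hp.eq]
  have sub_form : p * (1 - q) = p * (p - q) := by rw [mul_one_sub, mul_sub, hp.eq]
  have fixed_by_proj : p * (p * (1 - q) * p * (c ^ 2 * p)) * (p * (1 - q)) = p * (p * (1 - q)) := by
    calc p * (p * (1 - q) * p * (c ^ 2 * p)) * (p * (1 - q))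
        = p * p * ((p - q) * c * p) * (p - q) := by
          rw [mul_one_sub_mul_mul_groupInv hp hq hc, sub_form]; simp only [mul_assoc]
      _ = p * p * p * ((p - q) * c * (p - q)) := by
          rw [← (commute_sub_mul_groupInv hp hq hc).eq]; simp only [mul_assoc]
      _ = p * (p * (1 - q)) := by rw [hc.1, hp.eq, hp.eq, split, sub_form]
  have absorb : p * (c ^ 2 * p) ^ 2 * (p * (1 - q)) = (c ^ 2 * p) ^ 2 * (1 - q) := by
    calc p * (c ^ 2 * p) ^ 2 * (p * (1 - q))
        = p * (c ^ 2 * p) * (c ^ 2 * (p * p)) * (1 - q) := by simp only [sq, mul_assoc]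
      _ = (c ^ 2 * p) ^ 2 * (1 - q) := by rw [mul_groupInv_sq_mul hp hq hc, hp.eq, ← sq]
  have inverse := (isGroupInvOf_mul_one_sub_mul hp hq hc).cline_formula fixed_by_proj
  rwa [split, absorb] at inverse

theorem isGroupInvOf_one_sub_mul (hp : IsIdempotentElem p) (hq : IsIdempotentElem q)
    (hc : IsGroupInvOf (p - q) c) :
    IsGroupInvOf ((1 - q) * p) ((1 - q) * (c ^ 2 * p) ^ 2) := by
  have split : (1 - q) * p * p = (1 - q) * p := by rw [mul_assoc, hp.eq]
  have sub_form : (1 - q) * p = (p - q) * p := by rw [one_sub_mul, sub_mul, hp.eq]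
  have reversed : p * ((1 - q) * p) = p * (1 - q) * p := (mul_assoc ..).symm
  have fixed_by_proj : (1 - q) * p * (p * ((1 - q) * p) * (c ^ 2 * p)) * p = (1 - q) * p * p := by
    calc (1 - q) * p * (p * ((1 - q) * p) * (c ^ 2 * p)) * p
        = (p - q) * (p * p * ((p - q) * c)) * p := by
          rw [reversed, mul_one_sub_mul_mul_groupInv hp hq hc, sub_form]; simp only [mul_assoc]
      _ = (p - q) * (c * (p - q)) * p := by
          rw [hp.eq, (commute_sub_mul_groupInv hp hq hc).eq, hc.commute_self.eq]
          simp only [mul_assoc, hp.eq]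
      _ = (1 - q) * p * p := by rw [← mul_assoc (p - q), hc.1, split, sub_form]
  have absorb : (1 - q) * p * (c ^ 2 * p) ^ 2 * p = (1 - q) * (c ^ 2 * p) ^ 2 := by
    calc (1 - q) * p * (c ^ 2 * p) ^ 2 * p
        = (1 - q) * (p * (c ^ 2 * p) * (c ^ 2 * (p * p))) := by simp only [sq, mul_assoc]
      _ = (1 - q) * (c ^ 2 * p) ^ 2 := by rw [mul_groupInv_sq_mul hp hq hc, hp.eq, ← sq]
  have inverse : IsGroupInvOf (p * ((1 - q) * p)) (c ^ 2 * p) := by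
    rw [reversed]
    exact isGroupInvOf_mul_one_sub_mul hp hq hc
  simpa only [split, absorb] using inverse.cline_formula fixed_by_proj

end Idempotents

theorem group_inv_products (p q q1 f g h : R) (hp : p * p = p) (hq : q * q = q)
    (h1 : q1 = p * q * p) (hpq : GroupInvertible (p - q))
    (hf : f = p * gi (p - q)) (hg : g = gi (p - q) * p)
    (hh : h = gi (p - q) * (p - q)) :
    GroupInvertible (p - p * q * p) ∧ GroupInvertible (p - p * q) ∧
      GroupInvertible (p - q * p) ∧
      gi (p - p * q * p) = f * g ∧ f * g = gi (p - q1) ∧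
      gi (p - p * q) = (f * g) ^ 2 * (1 - q) ∧
      gi (p - q * p) = (1 - q) * (f * g) ^ 2 := by
  have hc := hpq.isGroupInvOf_gi
  have hfg : f * g = gi (p - q) ^ 2 * p := by rw [hf, hg, mul_groupInv_mul_groupInv_mul hp hq hc]
  have compression : p * (1 - q) * p = p - p * q * p := by rw [mul_one_sub, sub_mul, hp]
  have inv_compression := isGroupInvOf_mul_one_sub_mul hp hq hc
  have inv_left := isGroupInvOf_mul_one_sub hp hq hc
  have inv_right := isGroupInvOf_one_sub_mul hp hq hc
  rw [compression, ← hfg] at inv_compression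
  rw [mul_one_sub, ← hfg] at inv_left
  rw [one_sub_mul, ← hfg] at inv_right
  rw [h1]
  exact ⟨⟨_, inv_compression⟩, ⟨_, inv_left⟩, ⟨_, inv_right⟩, inv_compression.gi_eq,
    inv_compression.gi_eq.symm, inv_left.gi_eq, inv_right.gi_eq⟩
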